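/- arXiv:2002.05367 — 2 statements merged into one kernel-verified Lean document; each statement's English description precedes it below -/
import Mathlib

section
/- Let S ⊆ Y = P^{n_1} × ... × P^{n_k} be a nondegenerate circuit with #S = 5. Then one of the following cases occurs: (1) k = 1 and n_1 = 3; (2) k = 2 and n_1 = n_2 = 1; (3) k = 2 and n_1 + n_2 = 3; (4) k = 3 and n_1 = n_2 = n_3 = 1. -/
open scoped LinearAlgebra.Projectivization
open Projectivization

/-- The multiprojective space `Y = P^{n 0} × ... × P^{n (k-1)}` over `K`,
where `P^m = P(K^{m+1})`. -/
abbrev MultiProj (K : Type*) [Field K] {k : ℕ} (n : Fin k → ℕ) :=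
  ∀ i : Fin k, ℙ K (Fin (n i + 1) → K)

/-- A vector representative of the Segre image `ν(x)` of a point `x ∈ Y`:
the tensor product of representatives of the coordinates. -/
noncomputable def segreVec {K : Type*} [Field K] {k : ℕ} {n : Fin k → ℕ}
    (x : MultiProj K n) : PiTensorProduct K (fun i : Fin k => Fin (n i + 1) → K) :=
  PiTensorProduct.tprod K (fun i => (x i).rep)

/-- `e(S) = #S − 1 − dim⟨ν(S)⟩`, computed as `#S` minus the rank of the linear span
of vector representatives of `ν(S)`. -/
noncomputable def eSet {K : Type*} [Field K] {k : ℕ} {n : Fin k → ℕ}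
    (S : Set (MultiProj K n)) : ℕ :=
  S.ncard - Module.finrank K ↥(Submodule.span K (segreVec '' S))

/-- `S ⊆ Y` is nondegenerate: `π i '' S` spans `P^{n i}` for every `i`. -/
def Nondeg {K : Type*} [Field K] {k : ℕ} {n : Fin k → ℕ}
    (S : Set (MultiProj K n)) : Prop :=
  ∀ i : Fin k, Submodule.span K ((fun x => (x i).rep) '' S) = ⊤

/-- For products of `P^1`'s: `S` is nondegenerate iff each projection has ≥ 2 points. -/
def NondegPts {K : Type*} [Field K] {k : ℕ} {n : Fin k → ℕ}
    (S : Set (MultiProj K n)) : Prop :=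
  ∀ i : Fin k, ∃ p ∈ S, ∃ q ∈ S, p i ≠ q i

/-- `S` is a circuit: linearly dependent, but every proper subset is linearly independent. -/
def IsCircuit {K : Type*} [Field K] {k : ℕ} {n : Fin k → ℕ}
    (S : Set (MultiProj K n)) : Prop :=
  0 < eSet S ∧ ∀ S' : Set (MultiProj K n), S' ⊂ S → eSet S' = 0

/-- `q ∈ P^r` equals `ν(s)` for the point `s ∈ Y`. -/
def IsSegreOf {K : Type*} [Field K] {k : ℕ} {n : Fin k → ℕ}
    (q : ℙ K (PiTensorProduct K (fun i : Fin k => Fin (n i + 1) → K)))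
    (s : MultiProj K n) : Prop :=
  ∃ c : K, q.rep = c • segreVec s

/-- `q ∈ P^r` lies on the Segre variety `ν(Y)`. -/
def InSegre {K : Type*} [Field K] {k : ℕ} {n : Fin k → ℕ}
    (q : ℙ K (PiTensorProduct K (fun i : Fin k => Fin (n i + 1) → K))) : Prop :=
  ∃ y : MultiProj K n, IsSegreOf q y

/-- `S` is minimal: there is no projective line `L ⊆ P^r` contained in the Segre variety
`ν(Y)` meeting `ν(S)` in at least two points. -/
def IsMinimal {K : Type*} [Field K] {k : ℕ} {n : Fin k → ℕ}
    (S : Set (MultiProj K n)) : Prop :=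
  ¬ ∃ W : Submodule K (PiTensorProduct K (fun i : Fin k => Fin (n i + 1) → K)),
      Module.finrank K ↥W = 2 ∧
      (∀ x : ℙ K (PiTensorProduct K (fun i : Fin k => Fin (n i + 1) → K)),
        x.rep ∈ W → InSegre x) ∧
      ∃ x₁ x₂ : ℙ K (PiTensorProduct K (fun i : Fin k => Fin (n i + 1) → K)),
        x₁ ≠ x₂ ∧ x₁.rep ∈ W ∧ x₂.rep ∈ W ∧
        (∃ s₁ ∈ S, IsSegreOf x₁ s₁) ∧ (∃ s₂ ∈ S, IsSegreOf x₂ s₂)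

/-- The `X`-rank of a point `q ∈ P^r`: the minimal cardinality of a finite `A ⊆ Y`
with `q ∈ ⟨ν(A)⟩`. -/
noncomputable def xRank {K : Type*} [Field K] {k : ℕ} {n : Fin k → ℕ}
    (q : ℙ K (PiTensorProduct K (fun i : Fin k => Fin (n i + 1) → K))) : ℕ :=
  sInf {m : ℕ | ∃ A : Set (MultiProj K n), A.Finite ∧ A.ncard = m ∧
    q.rep ∈ Submodule.span K (segreVec '' A)}

/-!
Call a family of vectors connected if its linear matroid is. The key inequality is
`rank x + rank y ≤ rank (x ⊗ y) + 1` for families `x`, `y` whose tensor product `v a = x a ⊗ y a` is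
connected. Take a maximal set `A` of indices for which it holds. If `A` is not everything, then by
connectivity there is a minimal `D` outside `A` such that `span (v '' D)` meets `span (v '' A)`.
Passing from `A` to `A ∪ D` raises the rank of `v` by at least `|D| - 1`. A vector in both spans is
a combination of the `v a`, `a ∈ D`, with all coefficients nonzero, and it vanishes modulo the span
of `y` on `A`; hence the rank of `x` on `D` plus the increase of the rank of `y` is at most `|D|`.
Finally `span (x '' A)` and `span (x '' D)` meet, since otherwise the tensor products would span
disjoint subspaces. Together these give the inequality for `A ∪ D`.

Disjointness of spans also shows that connectivity passes to the factors, so induction extends the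
inequality to any number of factors. A circuit `S` is connected of rank at most `#S - 1`, hence
`∑ n i + 2 ≤ #S` when `S` is nondegenerate. On the other hand, a proper subset of `S` is independent
in a space of dimension `∏ (n i + 1)`. For `#S = 5` these two bounds leave only the listed cases.
-/

open Module Submodule
open scoped TensorProduct

section Connected

variable {K ι V W E : Type*} [Field K] [AddCommGroup V] [Module K V] [AddCommGroup W] [Module K W]
  [AddCommGroup E] [Module K E]

instance finiteDimensional_span_image [Finite ι] (v : ι → E) (A : Set ι) :
    FiniteDimensional K (span K (v '' A)) :=
  FiniteDimensional.span_of_finite K (A.toFinite.image v)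

theorem finrank_sup_le_add_finrank_map_mkQ (P Q : Submodule K E) [FiniteDimensional K P]
    [FiniteDimensional K Q] :
    finrank K ↥(P ⊔ Q) ≤ finrank K P + finrank K (Q.map P.mkQ) := by
  have hrank := (P.mkQ.domRestrict (P ⊔ Q)).finrank_range_add_finrank_ker
  have hker : finrank K (P.mkQ.domRestrict (P ⊔ Q)).ker ≤ finrank K P := by
    rw [LinearMap.ker_domRestrict, ker_mkQ]
    exact (comapSubtypeEquivOfLe le_sup_left).finrank_eq.le
  have hrange : (P.mkQ.domRestrict (P ⊔ Q)).range = Q.map P.mkQ := by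
    rw [LinearMap.range_domRestrict, Submodule.map_sup, mkQ_map_self, bot_sup_eq]
  rw [hrange] at hrank
  omega

theorem finrank_span_image_union_lt [Finite ι] {v : ι → E} {A B : Set ι}
    (h : ¬Disjoint (span K (v '' A)) (span K (v '' B))) :
    finrank K (span K (v '' (A ∪ B))) <
      finrank K (span K (v '' A)) + finrank K (span K (v '' B)) := by
  rwa [Set.image_union, span_union, ← finrank_sup_add_finrank_inf_eq, lt_add_iff_pos_right,
    Nat.pos_iff_ne_zero, Ne, finrank_eq_zero, ← disjoint_iff]

theorem exists_linearMap_eqOn_of_disjoint {P Q : Submodule K E} (h : Disjoint P Q) :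
    ∃ g : E →ₗ[K] E, Set.EqOn g id P ∧ Set.EqOn g 0 Q := by
  have hker : (Q.mkQ.domRestrict P).ker = ⊥ := by
    rw [LinearMap.ker_domRestrict, ker_mkQ]
    exact disjoint_iff_comap_eq_bot.mp h
  obtain ⟨g, hg⟩ := LinearMap.exists_leftInverse_of_injective _ hker
  refine ⟨P.subtype ∘ₗ g ∘ₗ Q.mkQ, fun x hx => ?_, fun x hx => ?_⟩
  · exact congrArg P.subtype (LinearMap.congr_fun hg ⟨x, hx⟩)
  · simp [(Quotient.mk_eq_zero Q).mpr hx]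

theorem finrank_span_add_finrank_span_le_card_of_sum_tmul_eq_zero [Fintype ι] {x : ι → V}
    {y : ι → W} (h : ∑ a, x a ⊗ₜ[K] y a = 0) :
    finrank K (span K (Set.range x)) + finrank K (span K (Set.range y)) ≤ Fintype.card ι := by
  classical
  let X := Fintype.linearCombination K x
  let Y := Fintype.linearCombination K y
  let pairing := LinearEquiv.piRing K K ι K
  -- Under `(K^ι)* ≃ K^ι` the relation says that the row space of `x` lies in the kernel of `y`.
  have hle : X.dualMap.range.map pairing.toLinearMap ≤ Y.ker := by
    rintro _ ⟨_, ⟨f, rfl⟩, rfl⟩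
    have hf := congrArg ((TensorProduct.lid K W).toLinearMap ∘ₗ f.rTensor W) h
    simpa [X, Y, pairing, Fintype.linearCombination_apply, LinearEquiv.piRing_apply] using hf
  calc finrank K (span K (Set.range x)) + finrank K (span K (Set.range y))
      = finrank K (X.dualMap.range.map pairing.toLinearMap) + finrank K Y.range := by
        rw [LinearEquiv.finrank_map_eq, LinearMap.finrank_range_dualMap_eq_finrank_range,
          Fintype.range_linearCombination, Fintype.range_linearCombination]
    _ ≤ finrank K Y.ker + finrank K Y.range := by gcongr; exact finrank_mono hle
    _ = Fintype.card ι := by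
        rw [add_comm, Y.finrank_range_add_finrank_ker, finrank_fintype_fun_eq_card]

theorem finrank_span_singleton_add_le_tmul (x : V) (y : W) :
    finrank K (K ∙ x) + finrank K (K ∙ y) ≤ finrank K (K ∙ (x ⊗ₜ[K] y)) + 1 := by
  by_cases h : x ⊗ₜ[K] y = 0
  · have hcard := finrank_span_add_finrank_span_le_card_of_sum_tmul_eq_zero
      (ι := Unit) (x := fun _ => x) (y := fun _ => y) (by simpa using h)
    rw [Set.range_const, Set.range_const, Fintype.card_unit] at hcard
    omega
  · rw [finrank_span_singleton h]
    have hx : finrank K (K ∙ x) ≤ 1 := by simpa using finrank_span_le_card (R := K) {x}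
    have hy : finrank K (K ∙ y) ≤ 1 := by simpa using finrank_span_le_card (R := K) {y}
    omega

theorem disjoint_span_tmul {x : ι → V} {A B : Set ι}
    (h : Disjoint (span K (x '' A)) (span K (x '' B))) (y : ι → W) :
    Disjoint (span K ((fun a => x a ⊗ₜ[K] y a) '' A)) (span K ((fun a => x a ⊗ₜ[K] y a) '' B)) := by
  obtain ⟨g, hgA, hgB⟩ := exists_linearMap_eqOn_of_disjoint h
  have hA : span K ((fun a => x a ⊗ₜ[K] y a) '' A) ≤
      LinearMap.eqLocus (g.rTensor W) LinearMap.id := by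
    rw [span_le]
    rintro _ ⟨a, ha, rfl⟩
    simp [hgA (subset_span (Set.mem_image_of_mem x ha))]
  have hB : span K ((fun a => x a ⊗ₜ[K] y a) '' B) ≤ (g.rTensor W).ker := by
    rw [span_le]
    rintro _ ⟨b, hb, rfl⟩
    simp [hgB (subset_span (Set.mem_image_of_mem x hb))]
  rw [disjoint_def]
  intro t htA htB
  exact (hA htA).symm.trans (hB htB)

/-- `D` is a minimal finite set of indices whose vectors span a subspace meeting
`span K (v '' A)` nontrivially: the step by which `A` is enlarged inside a connected family. -/
def IsMinimalLink (K : Type*) [Field K] [Module K E] (v : ι → E) (A : Set ι) (D : Finset ι) :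
    Prop :=
  Minimal (fun D : Finset ι => ¬Disjoint (span K (v '' A)) (span K (v '' D))) D

namespace IsMinimalLink

variable {v : ι → E} {A : Set ι} {D : Finset ι}

theorem nonempty (hD : IsMinimalLink K v A D) : D.Nonempty := by
  rw [Finset.nonempty_iff_ne_empty]
  rintro rfl
  exact hD.prop (by simp)

theorem exists_support_eq (hD : IsMinimalLink K v A D) :
    ∃ l : ι →₀ K, l.support = D ∧ Finsupp.linearCombination K v l ∈ span K (v '' A) := by
  obtain ⟨u, ⟨huA, huD⟩, hu⟩ := exists_mem_ne_zero_of_ne_bot (disjoint_iff.not.mp hD.prop)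
  obtain ⟨l, hlD, rfl⟩ := (Finsupp.mem_span_image_iff_linearCombination K).mp huD
  have hsupp : ¬Disjoint (span K (v '' A)) (span K (v '' l.support)) := fun hdisj =>
    hu (disjoint_def.mp hdisj _ huA
      ((Finsupp.mem_span_image_iff_linearCombination K).mpr ⟨l, fun _ => id, rfl⟩))
  exact ⟨l, Minimal.eq_of_le hD hsupp (Finset.coe_subset.mp hlD), huA⟩

theorem linearIndepOn (hD : IsMinimalLink K v A D) : LinearIndepOn K v (D : Set ι) := by
  classical
  rw [linearIndepOn_iff_notMem_span]
  intro d hd hmem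
  refine Minimal.not_prop_of_lt hD (Finset.erase_ssubset hd) ?_
  rw [Finset.coe_erase, ← span_insert_eq_span hmem, ← Set.image_insert_eq,
    Set.insert_sdiff_self_of_mem hd]
  exact hD.prop

theorem finrank_add_card_le [Finite ι] (hD : IsMinimalLink K v A D) :
    finrank K (span K (v '' A)) + D.card ≤ finrank K (span K (v '' (A ∪ D))) + 1 := by
  classical
  obtain ⟨d, hd⟩ := hD.nonempty
  have hdisj : Disjoint (span K (v '' A)) (span K (v '' (D.erase d))) := by
    by_contra h
    exact Minimal.not_prop_of_lt hD (Finset.erase_ssubset hd) h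
  have hindep : LinearIndepOn K v (D.erase d : Set ι) :=
    hD.linearIndepOn.mono (Finset.coe_subset.mpr (Finset.erase_subset d D))
  have hcard : finrank K (span K (v '' (D.erase d))) + 1 = D.card := by
    rw [Set.image_eq_range, finrank_span_eq_card hindep]
    exact (congrArg (· + 1) (Fintype.card_coe _)).trans (Finset.card_erase_add_one hd)
  have hsup := finrank_sup_add_finrank_inf_eq (span K (v '' A)) (span K (v '' (D.erase d)))
  have hle : span K (v '' A) ⊔ span K (v '' (D.erase d)) ≤ span K (v '' (A ∪ D)) := by
    rw [← span_union, ← Set.image_union]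
    gcongr
    exact Finset.erase_subset d D
  have hmono := finrank_mono hle
  rw [hdisj.eq_bot, finrank_bot] at hsup
  omega

end IsMinimalLink

section Tmul

variable [Finite ι] {x : ι → V} {y : ι → W} {A : Set ι} {D : Finset ι}

theorem IsMinimalLink.finrank_left_add_finrank_right_le
    (hD : IsMinimalLink K (fun a => x a ⊗ₜ[K] y a) A D) :
    finrank K (span K (x '' D)) + finrank K (span K (y '' (A ∪ D))) ≤
      finrank K (span K (y '' A)) + D.card := by
  obtain ⟨l, rfl, hl⟩ := hD.exists_support_eq
  set Q := span K (y '' A)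
  have hspan : span K ((fun a => x a ⊗ₜ[K] y a) '' A) ≤ (Q.mkQ.lTensor V).ker := by
    rw [span_le]
    rintro _ ⟨a, ha, rfl⟩
    simp [(Quotient.mk_eq_zero Q).mpr (subset_span (Set.mem_image_of_mem y ha))]
  -- Modulo `Q` the relation keeps only its terms in `D`, all with nonzero coefficient.
  have hsum : ∑ a : l.support, (l a • x a) ⊗ₜ[K] Q.mkQ (y a) = 0 := by
    have := hspan hl
    rw [LinearMap.mem_ker, Finsupp.linearCombination_apply, Finsupp.sum, map_sum,
      ← Finset.sum_coe_sort] at this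
    simpa [TensorProduct.smul_tmul'] using this
  have hcard := finrank_span_add_finrank_span_le_card_of_sum_tmul_eq_zero hsum
  have hx : span K (x '' l.support) ≤ span K (Set.range fun a : l.support => l a • x a) := by
    rw [span_le]
    rintro _ ⟨a, ha, rfl⟩
    rw [← inv_smul_smul₀ (Finsupp.mem_support_iff.mp ha) (x a)]
    exact smul_mem _ _ (subset_span ⟨⟨a, ha⟩, rfl⟩)
  have hy : (span K (y '' l.support)).map Q.mkQ =
      span K (Set.range fun a : l.support => Q.mkQ (y a)) := by
    rw [map_span, ← Set.image_comp, Set.image_eq_range]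
    rfl
  have := FiniteDimensional.span_of_finite K (Set.finite_range fun a : l.support => l a • x a)
  have hfinx := finrank_mono hx
  have hfiny := finrank_sup_le_add_finrank_map_mkQ Q (span K (y '' l.support))
  rw [← span_union, ← Set.image_union, hy] at hfiny
  rw [Fintype.card_coe] at hcard
  omega

theorem IsMinimalLink.finrank_add_finrank_union_le
    (hD : IsMinimalLink K (fun a => x a ⊗ₜ[K] y a) A D)
    (hA : finrank K (span K (x '' A)) + finrank K (span K (y '' A)) ≤
      finrank K (span K ((fun a => x a ⊗ₜ[K] y a) '' A)) + 1) :
    finrank K (span K (x '' (A ∪ D))) + finrank K (span K (y '' (A ∪ D))) ≤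
      finrank K (span K ((fun a => x a ⊗ₜ[K] y a) '' (A ∪ D))) + 1 := by
  have hx := finrank_span_image_union_lt fun h => hD.prop (disjoint_span_tmul h y)
  have hxy := hD.finrank_left_add_finrank_right_le
  have hv := hD.finrank_add_card_le
  omega

end Tmul

theorem finrank_piTensorProduct {R J : Type*} [CommRing R] [Nontrivial R] [Fintype J]
    (M : J → Type*) [∀ j, AddCommGroup (M j)] [∀ j, Module R (M j)] [∀ j, Module.Free R (M j)]
    [∀ j, Module.Finite R (M j)] : finrank R (⨂[R] j, M j) = ∏ j, finrank R (M j) := by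
  classical
  rw [finrank_eq_card_basis (Basis.piTensorProduct fun j => finBasis R (M j)), Fintype.card_pi]
  simp only [Fintype.card_fin]

open PiTensorProduct in
theorem one_le_finrank_span_tprod_of_isEmpty [Finite ι] [Nonempty ι] {J : Type*} [IsEmpty J]
    {M : J → Type*} [∀ j, AddCommGroup (M j)] [∀ j, Module K (M j)] (x : ι → ∀ j, M j) :
    1 ≤ finrank K (span K (Set.range fun a => tprod K (x a))) := by
  have := FiniteDimensional.span_of_finite K (Set.finite_range fun a => tprod K (x a))
  rw [one_le_finrank_iff, Ne, span_eq_bot, Set.forall_mem_range, not_forall]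
  refine ⟨Classical.arbitrary ι, fun h0 => ?_⟩
  simpa using congrArg (isEmptyEquiv J) h0

/-- A family of vectors is connected if its span is not the direct sum of the spans of two
complementary nonempty subfamilies, i.e. if its linear matroid is connected. -/
def LinearConnected (K : Type*) [Field K] [Module K E] (v : ι → E) : Prop :=
  ∀ A : Set ι, A.Nonempty → Aᶜ.Nonempty → ¬Disjoint (span K (v '' A)) (span K (v '' Aᶜ))

namespace LinearConnected

theorem of_comp {v : ι → E} {f : E →ₗ[K] W} (hf : Function.Injective f)
    (h : LinearConnected K (f ∘ v)) : LinearConnected K v := by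
  intro A hA hA' hdisj
  apply h A hA hA'
  rw [Set.image_comp, Set.image_comp, ← map_span, ← map_span]
  exact disjoint_map hf hdisj

theorem left_of_tmul {x : ι → V} {y : ι → W} (h : LinearConnected K fun a => x a ⊗ₜ[K] y a) :
    LinearConnected K x :=
  fun A hA hA' hdisj => h A hA hA' (disjoint_span_tmul hdisj y)

theorem of_ncard_le_finrank [Finite ι] {v : ι → E}
    (hv : finrank K (span K (Set.range v)) < Nat.card ι)
    (hproper : ∀ A ≠ Set.univ, A.ncard ≤ finrank K (span K (v '' A))) : LinearConnected K v := by
  intro A hA hA' hdisj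
  have hcard := hproper A (Set.nonempty_compl.mp hA')
  have hcard' := hproper Aᶜ (Set.nonempty_compl.mp (by rwa [compl_compl]))
  have hsum := finrank_sup_add_finrank_inf_eq (span K (v '' A)) (span K (v '' Aᶜ))
  rw [hdisj.eq_bot, finrank_bot, ← span_union, ← Set.image_union, Set.union_compl_self,
    Set.image_univ] at hsum
  have htotal := Set.ncard_add_ncard_compl A
  omega

theorem exists_isMinimalLink [Finite ι] {v : ι → E} (hv : LinearConnected K v) {A : Set ι}
    (hA : A.Nonempty) (hA' : Aᶜ.Nonempty) :
    ∃ D : Finset ι, (D : Set ι) ⊆ Aᶜ ∧ IsMinimalLink K v A D := by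
  obtain ⟨D, hDA, hD⟩ := exists_minimal_le_of_wellFoundedLT
    (fun D : Finset ι => ¬Disjoint (span K (v '' A)) (span K (v '' D))) Aᶜ.toFinite.toFinset
    (by simpa using hv A hA hA')
  exact ⟨D, by simpa using hDA, hD⟩

theorem finrank_span_add_finrank_span_le [Finite ι] [Nonempty ι] {x : ι → V} {y : ι → W}
    (h : LinearConnected K fun a => x a ⊗ₜ[K] y a) :
    finrank K (span K (Set.range x)) + finrank K (span K (Set.range y)) ≤
      finrank K (span K (Set.range fun a => x a ⊗ₜ[K] y a)) + 1 := by
  obtain ⟨a₀⟩ := ‹Nonempty ι›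
  have hsingle : finrank K (span K (x '' {a₀})) + finrank K (span K (y '' {a₀})) ≤
      finrank K (span K ((fun a => x a ⊗ₜ[K] y a) '' {a₀})) + 1 := by
    rw [Set.image_singleton, Set.image_singleton, Set.image_singleton]
    exact finrank_span_singleton_add_le_tmul (x a₀) (y a₀)
  obtain ⟨A, haA, hA⟩ := exists_maximal_ge_of_wellFoundedGT
    (fun A : Set ι => finrank K (span K (x '' A)) + finrank K (span K (y '' A)) ≤
      finrank K (span K ((fun a => x a ⊗ₜ[K] y a) '' A)) + 1) {a₀} hsingle
  suffices hAuniv : A = Set.univ by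
    rw [← Set.image_univ, ← Set.image_univ, ← Set.image_univ, ← hAuniv]
    exact hA.prop
  by_contra hne
  obtain ⟨D, hDA, hD⟩ := h.exists_isMinimalLink ⟨a₀, haA rfl⟩ (Set.nonempty_compl.mpr hne)
  obtain ⟨d, hd⟩ := hD.nonempty
  have hunion : A ∪ D ⊆ A :=
    hA.le_of_ge (hD.finrank_add_finrank_union_le hA.prop) Set.subset_union_left
  exact hDA hd (hunion (Or.inr hd))

open PiTensorProduct in
theorem sum_finrank_span_add_one_le [Finite ι] [Nonempty ι] {J : Type*} [Fintype J]
    {M : J → Type*} [∀ j, AddCommGroup (M j)] [∀ j, Module K (M j)] {x : ι → ∀ j, M j}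
    (h : LinearConnected K fun a => tprod K (x a)) :
    ∑ j, finrank K (span K (Set.range fun a => x a j)) + 1 ≤
      finrank K (span K (Set.range fun a => tprod K (x a))) + Fintype.card J := by
  classical
  induction hJ : Fintype.card J generalizing J with
  | zero =>
    have := Fintype.card_eq_zero_iff.mp hJ
    simpa using one_le_finrank_span_tprod_of_isEmpty x
  | succ m ih =>
    obtain ⟨j₀⟩ : Nonempty J := Fintype.card_pos_iff.mp (by omega)
    let e := equivPiTensorComplSingletonTensor K M j₀
    let rest (a : ι) : ⨂[K] j : ({j₀}ᶜ : Set J), M j := tprod K fun j => x a j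
    have he (a : ι) : e (tprod K (x a)) = rest a ⊗ₜ x a j₀ :=
      equivPiTensorComplSingletonTensor_tprod _ _ j₀ (x a)
    have hconn : LinearConnected K fun a => rest a ⊗ₜ[K] x a j₀ :=
      of_comp e.symm.injective (f := e.symm.toLinearMap) <| by
        simpa [Function.comp_def, ← he] using h
    have hrank : finrank K (span K (Set.range fun a => rest a ⊗ₜ[K] x a j₀)) =
        finrank K (span K (Set.range fun a => tprod K (x a))) := by
      rw [← LinearEquiv.finrank_map_eq e, map_span, ← Set.range_comp, ← funext he]
      rfl
    have hrest : ∑ j : {j // j ≠ j₀}, finrank K (span K (Set.range fun a => x a j)) + 1 ≤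
        finrank K (span K (Set.range rest)) + m :=
      ih (J := ({j₀}ᶜ : Set J)) hconn.left_of_tmul (by
        rw [Fintype.card_compl_set, hJ, Fintype.card_unique, Nat.add_sub_cancel])
    have htmul := hconn.finrank_span_add_finrank_span_le
    rw [Fintype.sum_eq_add_sum_subtype_ne _ j₀]
    omega

end LinearConnected

end Connected

section Segre

variable {K : Type*} [Field K]

namespace IsCircuit

variable {k : ℕ} {n : Fin k → ℕ} {S T : Set (MultiProj K n)}

theorem finrank_lt_ncard (h : IsCircuit S) : finrank K (span K (segreVec '' S)) < S.ncard :=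
  Nat.sub_pos_iff_lt.mp h.1

theorem finite (h : IsCircuit S) : S.Finite :=
  Set.finite_of_ncard_pos (Nat.zero_lt_of_lt h.finrank_lt_ncard)

theorem nonempty (h : IsCircuit S) : S.Nonempty :=
  Set.nonempty_of_ncard_ne_zero (Nat.ne_zero_of_lt h.finrank_lt_ncard)

theorem ncard_le_finrank_of_ssubset (h : IsCircuit S) (hT : T ⊂ S) :
    T.ncard ≤ finrank K (span K (segreVec '' T)) :=
  Nat.sub_eq_zero_iff_le.mp (h.2 T hT)

theorem linearConnected (h : IsCircuit S) : LinearConnected K fun p : S => segreVec p.1 := by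
  have := h.finite.to_subtype
  refine LinearConnected.of_ncard_le_finrank ?_ fun A hA => ?_
  · rw [← Set.image_eq_range]
    exact h.finrank_lt_ncard
  · have hss : Subtype.val '' A ⊂ S := by
      refine (Subtype.coe_image_subset S A).ssubset_of_ne fun h => hA ?_
      apply Subtype.val_injective.image_injective
      rw [h, Set.image_univ, Subtype.range_coe]
    rw [← Set.ncard_image_of_injective A Subtype.val_injective, ← Set.image_image segreVec]
    exact h.ncard_le_finrank_of_ssubset hss

theorem sum_add_two_le_ncard (h : IsCircuit S) (hnd : Nondeg S) : ∑ i, n i + 2 ≤ S.ncard := by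
  have := h.finite.to_subtype
  have := h.nonempty.to_subtype
  have hfactor (i : Fin k) : finrank K (span K (Set.range fun p : S => (p.1 i).rep)) = n i + 1 := by
    rw [← Set.image_eq_range (fun p : MultiProj K n => (p i).rep), hnd i, finrank_top,
      finrank_fin_fun]
  have hsum : ∑ i, (n i + 1) + 1 ≤ finrank K (span K (segreVec '' S)) + k := by
    rw [Set.image_eq_range, ← Finset.sum_congr rfl fun i _ => hfactor i]
    exact h.linearConnected.sum_finrank_span_add_one_le.trans_eq
      (congrArg _ (Fintype.card_fin k))
  have hrank := h.finrank_lt_ncard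
  rw [Finset.sum_add_distrib, Fin.sum_const, smul_eq_mul, mul_one] at hsum
  omega

theorem ncard_le_prod_add_one (h : IsCircuit S) : S.ncard ≤ ∏ i, (n i + 1) + 1 := by
  obtain ⟨p, hp⟩ := h.nonempty
  have hspan := h.ncard_le_finrank_of_ssubset (Set.sdiff_singleton_ssubset.mpr hp)
  have hdim := (finrank_le (span K (segreVec '' (S \ {p})))).trans_eq
    (finrank_piTensorProduct fun i => Fin (n i + 1) → K)
  simp only [finrank_fin_fun] at hdim
  have hcard := Set.ncard_sdiff_singleton_add_one hp h.finite
  omega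

end IsCircuit

end Segre

theorem segre_circuit_card_five_classification
    {K : Type*} [Field K] {k : ℕ} {n : Fin k → ℕ}
    (hk : 0 < k) (hn : ∀ i, 0 < n i)
    (S : Set (MultiProj K n)) (hSfin : S.Finite) (hScard : S.ncard = 5)
    (hnd : Nondeg S) (hcirc : IsCircuit S) :
    (k = 1 ∧ ∀ i, n i = 3) ∨ (k = 2 ∧ ∀ i, n i = 1) ∨
      (k = 2 ∧ ∑ i, n i = 3) ∨ (k = 3 ∧ ∀ i, n i = 1) := by
  have hsum := hcirc.sum_add_two_le_ncard hnd
  have hprod := hcirc.ncard_le_prod_add_one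
  rw [hScard] at hsum hprod
  have hk_le : k ≤ ∑ i, n i := by
    simpa using Finset.card_nsmul_le_sum Finset.univ n 1 fun i _ => Nat.succ_le_of_lt (hn i)
  have hone (hle : ∑ i, n i ≤ k) (i : Fin k) : n i = 1 :=
    ((Finset.sum_eq_sum_iff_of_le fun i _ => Nat.succ_le_of_lt (hn i)).mp
      (by simpa using hk_le.antisymm hle) i (Finset.mem_univ i)).symm
  have hk3 : k ≤ 3 := by omega
  interval_cases k
  · rw [Fin.sum_univ_one] at hsum
    rw [Fin.prod_univ_one] at hprod
    exact .inl ⟨rfl, Fin.forall_fin_one.mpr (by omega)⟩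
  · by_cases hle : ∑ i, n i ≤ 2
    · exact .inr (.inl ⟨rfl, hone hle⟩)
    · exact .inr (.inr (.inl ⟨rfl, by omega⟩))
  · exact .inr (.inr (.inr ⟨rfl, hone (by omega)⟩))
end

section
/- Let S ⊆ Y = P^{n_1} × ... × P^{n_k} be a nondegenerate finite set with #S = 5 and e(S) ≥ 2, and let A be the kernel of S. Then one of the following cases occurs: (1) e(S) = 3, A = S, and exactly one index i has dim⟨π_i(A)⟩ = 1 while dim⟨π_j(A)⟩ = 0 for all j ≠ i; (2) e(S) = 2, A = S, and exactly one index i has dim⟨π_i(A)⟩ = 2 while dim⟨π_j(A)⟩ = 0 for all j ≠ i; (3) e(S) = 2, A = S, and exactly two indices i have dim⟨π_i(A)⟩ = 1 while all other indices j have dim⟨π_j(A)⟩ = 0; (4) e(S) = 2, #A = 4, and exactly one index i has dim⟨π_i(A)⟩ = 1 while dim⟨π_j(A)⟩ = 0 for all j ≠ i. -/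
open scoped LinearAlgebra.Projectivization
open Projectivization

/-- `projSpanDim A i` is the rank of the linear span of representatives of `π i '' A`,
i.e. `dim⟨π i (A)⟩ + 1`. -/
noncomputable def projSpanDim {K : Type*} [Field K] {k : ℕ} {n : Fin k → ℕ}
    (A : Set (MultiProj K n)) (i : Fin k) : ℕ :=
  Module.finrank K ↥(Submodule.span K ((fun x => (x i).rep) '' A))

/-!
Contracting the `i`-th tensor factor with a linear form `φ` kills the points of `S` on the
hyperplane `φ = 0` of `P^{n_i}` and maps every other point, up to scale, to the point with its
`i`-th coordinate forgotten. Rank-nullity then bounds the rank of the hyperplane section plus the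
rank of the residual set by the rank of `S`.

The points of a kernel `A` are dependent on the remaining ones, so no hyperplane misses
exactly one point of `A`. If `ν(A)` spans a line, it follows that only one coordinate varies. If
`ν(A)` spans a plane and a hyperplane section contains two points of `A`, the points off the
hyperplane form a residual set of rank one, hence are at least two points agreeing outside
coordinate `i`. Playing such pairs for different coordinates against each other shows that at most
two coordinates vary, and that if two do then each of them spans only a line.
-/

section LinearAlgebra

variable {K V W : Type*} [DivisionRing K] [AddCommGroup V] [Module K V] [AddCommGroup W]
  [Module K W]

theorem finrank_add_finrank_le_of_le_ker_of_le_map (f : V →ₗ[K] W) {P U : Submodule K V}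
    [FiniteDimensional K P] {Q : Submodule K W} (hU : U ≤ P) (hker : U ≤ LinearMap.ker f)
    (hQ : Q ≤ P.map f) :
    Module.finrank K U + Module.finrank K Q ≤ Module.finrank K P := by
  have hQ_range : Module.finrank K Q ≤ Module.finrank K (LinearMap.range (f.domRestrict P)) := by
    rw [LinearMap.range_domRestrict]
    exact Submodule.finrank_mono hQ
  have hU_ker : Module.finrank K U ≤ Module.finrank K (LinearMap.ker (f.domRestrict P)) := by
    rw [← (Submodule.submoduleOfEquivOfLe hU).finrank_eq]
    exact Submodule.finrank_mono fun _ hx => hker hx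
  have := (f.domRestrict P).finrank_range_add_finrank_ker
  omega

theorem exists_dual_ne_zero_of_ncard_lt_finrank_span {T X : Set V} (hT : T.Finite)
    (h : T.ncard < Module.finrank K (Submodule.span K X)) :
    ∃ φ : V →ₗ[K] K, (∀ t ∈ T, φ t = 0) ∧ ∃ x ∈ X, φ x ≠ 0 := by
  have : Fintype T := hT.fintype
  have : FiniteDimensional K (Submodule.span K T) := .span_of_finite K hT
  obtain ⟨x, hxX, hxT⟩ : ∃ x ∈ X, x ∉ Submodule.span K T := by
    by_contra! hX
    have hspan := Submodule.finrank_mono (Submodule.span_le.2 hX)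
    have hcard := finrank_span_le_card (R := K) T
    rw [← Set.ncard_eq_toFinset_card'] at hcard
    omega
  obtain ⟨φ, hφx, hφT⟩ := Submodule.exists_le_ker_of_notMem hxT
  exact ⟨φ, fun t ht => hφT (Submodule.subset_span ht), x, hxX, hφx⟩

theorem tprod_ne_zero {R ι : Type*} [CommSemiring R] [NoZeroDivisors R] [Nontrivial R] [Finite ι]
    {M : ι → Type*} [∀ i, AddCommMonoid (M i)] [∀ i, Module R (M i)]
    [∀ i, Module.Projective R (M i)] {v : ∀ i, M i} (hv : ∀ i, v i ≠ 0) :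
    PiTensorProduct.tprod R v ≠ 0 := by
  have := Fintype.ofFinite ι
  choose f hf using fun i => Module.Projective.exists_dual_ne_zero R (hv i)
  intro h
  have hprod := congrArg (PiTensorProduct.lift
    ((MultilinearMap.mkPiAlgebra R ι R).compLinearMap f)) h
  rw [PiTensorProduct.lift.tprod, map_zero, MultilinearMap.compLinearMap_apply,
    MultilinearMap.mkPiAlgebra_apply] at hprod
  exact Finset.prod_ne_zero_iff.2 (fun i _ => hf i) hprod

end LinearAlgebra

namespace Segre

variable {K ι : Type*} [Field K] {V : ι → Type*} [∀ i, AddCommGroup (V i)] [∀ i, Module K (V i)]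

/-- A vector representing the Segre image of a point of a product of projective spaces, as
`segreVec` but for an arbitrary family of vector spaces. -/
noncomputable def tensorRep (x : ∀ i, ℙ K (V i)) : PiTensorProduct K V :=
  PiTensorProduct.tprod K fun i => (x i).rep

/-- The rank of the linear span of the Segre image of `S`, i.e. `dim⟨ν(S)⟩ + 1`. -/
noncomputable def segreRank (S : Set (∀ i, ℙ K (V i))) : ℕ :=
  Module.finrank K (Submodule.span K (tensorRep '' S))

/-- The number `e(S)`, as `eSet` but for an arbitrary family of vector spaces. The subtraction is
not truncated for finite `S`, by `segreRank_le_ncard`. -/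
noncomputable def excess (S : Set (∀ i, ℙ K (V i))) : ℕ :=
  S.ncard - segreRank S

/-- The rank of the linear span of the `i`-th projection of `S`, as `projSpanDim` but for an
arbitrary family of vector spaces. -/
noncomputable def projRank (S : Set (∀ i, ℙ K (V i))) (i : ι) : ℕ :=
  Module.finrank K (Submodule.span K ((fun x => (x i).rep) '' S))

/-- `A` is a kernel of `S`: a minimal subset with the same, positive, number `e`. -/
structure IsKernel (A S : Set (∀ i, ℙ K (V i))) : Prop where
  excess_pos : 0 < excess S
  subset : A ⊆ S
  excess_eq : excess A = excess S
  excess_lt : ∀ A' ⊂ A, excess A' < excess S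

/-- Every Segre vector of a point of `S` depends linearly on those of the other points, i.e. the
matroid of Segre vectors of `S` has no coloops. Kernels have this property. -/
def Coloopless (S : Set (∀ i, ℙ K (V i))) : Prop :=
  ∀ s ∈ S, segreRank (S \ {s}) = segreRank S

/-- The `i`-th coordinate is not constant on `S`. -/
def Varies (S : Set (∀ i, ℙ K (V i))) (i : ι) : Prop :=
  (Function.eval i '' S).Nontrivial

/-- The points `x` and `y` have the same coordinates, except possibly the `i`-th ones. -/
def AgreeOff (i : ι) (x y : ∀ i, ℙ K (V i)) : Prop :=
  ∀ j, j ≠ i → x j = y j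

/-- The points whose `i`-th coordinate lies on the hyperplane `φ = 0`; this is the whole space if
`φ = 0`. -/
def coordHyperplane {i : ι} (φ : Module.Dual K (V i)) : Set (∀ i, ℙ K (V i)) :=
  {x | φ (x i).rep = 0}

variable {S T : Set (∀ i, ℙ K (V i))} {x y : ∀ i, ℙ K (V i)} {i j l : ι}

section Coordinates

theorem varies_of_ne (hx : x ∈ S) (hy : y ∈ S) (h : x i ≠ y i) : Varies S i :=
  ⟨x i, Set.mem_image_of_mem _ hx, y i, Set.mem_image_of_mem _ hy, h⟩

theorem exists_varies_of_nontrivial (hS : S.Nontrivial) : ∃ i, Varies S i := by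
  obtain ⟨x, hx, y, hy, hxy⟩ := hS
  obtain ⟨i, hi⟩ := Function.ne_iff.1 hxy
  exact ⟨i, varies_of_ne hx hy hi⟩

theorem AgreeOff.varies (h : AgreeOff i x y) (hx : x ∈ S) (hy : y ∈ S) (hxy : x ≠ y) :
    Varies S i := by
  refine varies_of_ne hx hy fun hi => hxy (funext fun j => ?_)
  by_cases hj : j = i
  · exact hj ▸ hi
  · exact h j hj

theorem AgreeOff.eq (hi : AgreeOff i x y) (hj : AgreeOff j x y) (hij : i ≠ j) : x = y := by
  funext l
  by_cases hl : l = i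
  · exact hj l (hl ▸ hij)
  · exact hi l hl

theorem mem_coordHyperplane_congr {φ : Module.Dual K (V i)} (h : x i = y i) :
    x ∈ coordHyperplane φ ↔ y ∈ coordHyperplane φ := by
  simp only [coordHyperplane, Set.mem_ofPred_eq, h]

theorem agreeOff_of_update_eq [DecidableEq ι] {p : ℙ K (V i)}
    (h : Function.update x i p = Function.update y i p) : AgreeOff i x y := fun j hj => by
  simpa [hj] using congrFun h j

end Coordinates

section ProjRank

theorem projRank_eq_one_of_not_varies (hS : S.Nonempty) (h : ¬ Varies S i) :
    projRank S i = 1 := by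
  obtain ⟨s, hs⟩ := hS
  have himage : (fun x : ∀ i, ℙ K (V i) => (x i).rep) '' S = {(s i).rep} := by
    refine Set.eq_singleton_iff_unique_mem.2 ⟨⟨s, hs, rfl⟩, ?_⟩
    rintro _ ⟨x, hx, rfl⟩
    exact congrArg _ (not_not.1 fun hne => h (varies_of_ne hx hs hne))
  rw [projRank, himage, finrank_span_singleton (s i).rep_nonzero]

theorem two_le_projRank_of_varies [Finite S] (h : Varies S i) : 2 ≤ projRank S i := by
  obtain ⟨_, ⟨x, hx, rfl⟩, _, ⟨y, hy, rfl⟩, hxy⟩ := h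
  have hli := independent_iff.1 ((independent_pair_iff_ne (x i) (y i)).2 hxy)
  have hspan : Submodule.span K (Set.range (Projectivization.rep ∘ ![x i, y i])) ≤
      Submodule.span K ((fun x => (x i).rep) '' S) := by
    refine Submodule.span_mono (Set.range_subset_iff.2 (Fin.forall_fin_two.2 ?_))
    exact ⟨⟨x, hx, rfl⟩, ⟨y, hy, rfl⟩⟩
  have : FiniteDimensional K (Submodule.span K ((fun x => (x i).rep) '' S)) :=
    .span_of_finite K (Set.toFinite _)
  simpa [projRank, finrank_span_eq_card hli] using Submodule.finrank_mono hspan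

theorem exists_coordHyperplane_of_ncard_lt_projRank [Finite T] (h : T.ncard < projRank S i) :
    ∃ φ : Module.Dual K (V i), T ⊆ coordHyperplane φ ∧ (S \ coordHyperplane φ).Nonempty := by
  obtain ⟨φ, hφT, _, ⟨x, hx, rfl⟩, hφx⟩ :=
    exists_dual_ne_zero_of_ncard_lt_finrank_span (T := (fun x => (x i).rep) '' T)
      (Set.toFinite _) ((Set.ncard_image_le (Set.toFinite T)).trans_lt h)
  exact ⟨φ, fun t ht => hφT _ ⟨t, ht, rfl⟩, x, hx, hφx⟩

theorem Varies.exists_coordHyperplane [Finite S] (h : Varies S i) (x : ∀ i, ℙ K (V i)) :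
    ∃ φ : Module.Dual K (V i), x ∈ coordHyperplane φ ∧ (S \ coordHyperplane φ).Nonempty := by
  have hlt : ({x} : Set (∀ i, ℙ K (V i))).ncard < projRank S i := by
    rw [Set.ncard_singleton]
    exact two_le_projRank_of_varies h
  simpa using exists_coordHyperplane_of_ncard_lt_projRank hlt

end ProjRank

section SegreRank

instance [Finite S] : FiniteDimensional K (Submodule.span K (tensorRep '' S)) :=
  .span_of_finite K (Set.toFinite _)

theorem segreRank_mono [Finite T] (h : S ⊆ T) : segreRank S ≤ segreRank T :=
  Submodule.finrank_mono (Submodule.span_mono (Set.image_mono h))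

theorem segreRank_le_ncard [Finite S] : segreRank S ≤ S.ncard := by
  have := Fintype.ofFinite (tensorRep '' S)
  refine (finrank_span_le_card (tensorRep '' S)).trans ?_
  rw [← Set.ncard_eq_toFinset_card']
  exact Set.ncard_image_le (Set.toFinite S)

theorem tensorRep_update [DecidableEq ι] (x : ∀ i, ℙ K (V i)) (p : ℙ K (V i)) :
    tensorRep (Function.update x i p) =
      PiTensorProduct.tprod K (Function.update (fun j => (x j).rep) i p.rep) :=
  congrArg _ (funext fun j => Function.apply_update (fun _ => Projectivization.rep) x i p j)

theorem map_smulRight_tensorRep [DecidableEq ι] (φ : Module.Dual K (V i)) (p : ℙ K (V i))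
    (x : ∀ i, ℙ K (V i)) :
    PiTensorProduct.map (Function.update (fun _ => LinearMap.id) i (φ.smulRight p.rep))
        (tensorRep x) =
      φ (x i).rep • tensorRep (Function.update x i p) := by
  rw [tensorRep_update, ← MultilinearMap.map_update_smul, tensorRep, PiTensorProduct.map_tprod]
  congr 1
  funext j
  by_cases h : j = i
  · subst h; simp
  · simp [h]

theorem segreRank_inter_add_segreRank_residual_le [DecidableEq ι] [Finite S]
    (φ : Module.Dual K (V i)) (p : ℙ K (V i)) :
    segreRank (S ∩ coordHyperplane φ) +
      segreRank ((Function.update · i p) '' (S \ coordHyperplane φ)) ≤ segreRank S := by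
  refine finrank_add_finrank_le_of_le_ker_of_le_map
    (PiTensorProduct.map (Function.update (fun _ => LinearMap.id) i (φ.smulRight p.rep)))
    (Submodule.span_mono (Set.image_mono Set.inter_subset_left)) ?_ ?_ <;>
  rw [Submodule.span_le]
  · rintro _ ⟨x, ⟨-, hφ : φ (x i).rep = 0⟩, rfl⟩
    simp [map_smulRight_tensorRep, hφ]
  · rintro _ ⟨_, ⟨x, ⟨hx, hφ : φ (x i).rep ≠ 0⟩, rfl⟩, rfl⟩
    refine ⟨(φ (x i).rep)⁻¹ • tensorRep x,
      Submodule.smul_mem _ _ (Submodule.subset_span ⟨x, hx, rfl⟩), ?_⟩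
    rw [map_smul, map_smulRight_tensorRep, inv_smul_smul₀ hφ]

variable [Finite ι]

theorem tensorRep_ne_zero (x : ∀ i, ℙ K (V i)) : tensorRep x ≠ 0 :=
  tprod_ne_zero fun i => (x i).rep_nonzero

theorem segreRank_singleton (x : ∀ i, ℙ K (V i)) : segreRank {x} = 1 := by
  rw [segreRank, Set.image_singleton, finrank_span_singleton (tensorRep_ne_zero x)]

theorem segreRank_pos_iff [Finite S] : 0 < segreRank S ↔ S.Nonempty := by
  refine ⟨fun hpos => ?_, fun ⟨x, hx⟩ => ?_⟩
  · by_contra! hempty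
    rw [hempty, segreRank, Set.image_empty, Submodule.span_empty, finrank_bot] at hpos
    exact lt_irrefl _ hpos
  · rw [← Nat.add_one_le_iff, zero_add, ← segreRank_singleton x]
    exact segreRank_mono (Set.singleton_subset_iff.2 hx)

theorem segreRank_inter_coordHyperplane_lt [Finite S] {φ : Module.Dual K (V i)}
    (h : (S \ coordHyperplane φ).Nonempty) :
    segreRank (S ∩ coordHyperplane φ) < segreRank S := by
  classical
  obtain ⟨x, hx⟩ := h
  have hresidual := segreRank_inter_add_segreRank_residual_le (S := S) φ (x i)
  have hpos := segreRank_pos_iff.2 (Set.Nonempty.image (Function.update · i (x i)) ⟨x, hx⟩)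
  omega

theorem two_le_segreRank_of_nontrivial [Finite S] (hS : S.Nontrivial) : 2 ≤ segreRank S := by
  obtain ⟨i, hi⟩ := exists_varies_of_nontrivial hS
  obtain ⟨x, hx⟩ := hS.nonempty
  obtain ⟨φ, hxφ, hφ⟩ := hi.exists_coordHyperplane x
  have hlt := segreRank_inter_coordHyperplane_lt hφ
  have hpos : 0 < segreRank (S ∩ coordHyperplane φ) := segreRank_pos_iff.2 ⟨x, hx, hxφ⟩
  omega

theorem subsingleton_of_segreRank_le_one [Finite S] (h : segreRank S ≤ 1) : S.Subsingleton := by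
  by_contra hS
  have := two_le_segreRank_of_nontrivial (Set.not_subsingleton_iff.1 hS)
  omega

theorem agreeOff_of_segreRank_le_segreRank_inter_add_one [Finite S] {φ : Module.Dual K (V i)}
    (h : segreRank S ≤ segreRank (S ∩ coordHyperplane φ) + 1)
    (hx : x ∈ S \ coordHyperplane φ) (hy : y ∈ S \ coordHyperplane φ) : AgreeOff i x y := by
  classical
  have hresidual := segreRank_inter_add_segreRank_residual_le (S := S) φ (x i)
  have hsub : ((Function.update · i (x i)) '' (S \ coordHyperplane φ)).Subsingleton :=
    subsingleton_of_segreRank_le_one (by omega)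
  exact agreeOff_of_update_eq (hsub ⟨x, hx, rfl⟩ ⟨y, hy, rfl⟩)

theorem projRank_eq_segreRank (hS : S.Nonempty) (h : ∀ j, j ≠ i → ¬ Varies S j) :
    projRank S i = segreRank S := by
  classical
  obtain ⟨s, hs⟩ := hS
  let L : V i →ₗ[K] PiTensorProduct K V :=
    (PiTensorProduct.tprod K).toLinearMap (fun j => (s j).rep) i
  have hL : Function.Injective L := by
    refine (injective_iff_map_eq_zero L).2 fun v hv => ?_
    by_contra hne
    refine tprod_ne_zero (R := K) (v := Function.update (fun j => (s j).rep) i v) (fun j => ?_) hv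
    by_cases hj : j = i
    · subst hj; simpa using hne
    · simpa [hj] using (s j).rep_nonzero
  have himage : tensorRep '' S = L '' ((fun x => (x i).rep) '' S) := by
    rw [Set.image_image]
    refine Set.image_congr fun x hx => ?_
    have hxs : x = Function.update s i (x i) := Function.eq_update_iff.2
      ⟨rfl, fun j hj => not_not.1 fun hne => h j hj (varies_of_ne hx hs hne)⟩
    exact (congrArg tensorRep hxs).trans (tensorRep_update s (x i))
  rw [segreRank, himage, Submodule.span_image]
  exact (Submodule.equivMapOfInjective L hL _).finrank_eq

theorem exists_projRank_eq_segreRank (hS : S.Nontrivial)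
    (h : ∀ i j, Varies S i → Varies S j → i = j) :
    ∃ i, projRank S i = segreRank S ∧ ∀ j, j ≠ i → projRank S j = 1 := by
  obtain ⟨i, hi⟩ := exists_varies_of_nontrivial hS
  have hconst : ∀ j, j ≠ i → ¬ Varies S j := fun j hj hvar => hj (h j i hvar hi)
  exact ⟨i, projRank_eq_segreRank hS.nonempty hconst,
    fun j hj => projRank_eq_one_of_not_varies hS.nonempty (hconst j hj)⟩

end SegreRank

section Line

variable [Finite ι] [Finite S]

theorem agreeOff_of_segreRank_le_two (hS : segreRank S ≤ 2) (hi : Varies S i)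
    {s : ∀ i, ℙ K (V i)} (hs : s ∈ S) (hx : x ∈ S \ {s}) (hy : y ∈ S \ {s}) :
    AgreeOff i x y := by
  obtain ⟨φ, hsφ, hφ⟩ := hi.exists_coordHyperplane s
  have hlt := segreRank_inter_coordHyperplane_lt hφ
  have hpos : 0 < segreRank (S ∩ coordHyperplane φ) := segreRank_pos_iff.2 ⟨s, hs, hsφ⟩
  have hsection : (S ∩ coordHyperplane φ).Subsingleton :=
    subsingleton_of_segreRank_le_one (by omega)
  have hoff : S \ {s} ⊆ S \ coordHyperplane φ :=
    fun z hz => ⟨hz.1, fun hzφ => hz.2 (hsection ⟨hz.1, hzφ⟩ ⟨hs, hsφ⟩)⟩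
  exact agreeOff_of_segreRank_le_segreRank_inter_add_one (by omega) (hoff hx) (hoff hy)

theorem subsingleton_sdiff_singleton_of_segreRank_le_two (hS : segreRank S ≤ 2)
    (hi : Varies S i) (hj : Varies S j) (hij : i ≠ j) {s : ∀ i, ℙ K (V i)} (hs : s ∈ S) :
    (S \ {s}).Subsingleton := fun _ hx _ hy =>
  (agreeOff_of_segreRank_le_two hS hi hs hx hy).eq (agreeOff_of_segreRank_le_two hS hj hs hx hy)
    hij

theorem eq_of_varies_of_two_lt_ncard (hS : segreRank S ≤ 2) (hcard : 2 < S.ncard)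
    (hi : Varies S i) (hj : Varies S j) : i = j := by
  by_contra hij
  obtain ⟨a, b, c, ha, hb, hc, hab, hac, hbc⟩ := (Set.two_lt_ncard_iff (Set.toFinite S)).1 hcard
  exact hbc (subsingleton_sdiff_singleton_of_segreRank_le_two hS hi hj hij ha
    ⟨hb, hab.symm⟩ ⟨hc, hac.symm⟩)

end Line

namespace Coloopless

variable [Finite ι] [Finite S]

theorem nontrivial (hcol : Coloopless S) (hS : S.Nonempty) : S.Nontrivial := by
  obtain ⟨s, hs⟩ := hS
  obtain ⟨t, ht⟩ : (S \ {s}).Nonempty := by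
    rw [← segreRank_pos_iff, hcol s hs]
    exact segreRank_pos_iff.2 ⟨s, hs⟩
  exact ⟨s, hs, t, ht.1, fun h => ht.2 h.symm⟩

theorem nontrivial_sdiff_coordHyperplane (hcol : Coloopless S) {φ : Module.Dual K (V i)}
    (hφ : (S \ coordHyperplane φ).Nonempty) : (S \ coordHyperplane φ).Nontrivial := by
  have hlt := segreRank_inter_coordHyperplane_lt hφ
  obtain ⟨w, hw⟩ := hφ
  by_contra hsub
  have hw_unique : S \ coordHyperplane φ = {w} :=
    (Set.not_nontrivial_iff.1 hsub).eq_singleton_of_mem hw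
  have hsection : S ∩ coordHyperplane φ = S \ {w} := by
    rw [← hw_unique, Set.sdiff_sdiff_right_self]
  rw [hsection, hcol w hw.1] at hlt
  exact lt_irrefl _ hlt

theorem exists_projRank_eq_two (hcol : Coloopless S) (hrank : segreRank S = 2) :
    ∃ i, projRank S i = 2 ∧ ∀ j, j ≠ i → projRank S j = 1 := by
  obtain ⟨s, hs⟩ : S.Nonempty := segreRank_pos_iff.1 (by omega)
  rw [← hrank]
  refine exists_projRank_eq_segreRank (hcol.nontrivial ⟨s, hs⟩) fun i j hi hj => ?_
  by_contra hij
  have hsub := subsingleton_sdiff_singleton_of_segreRank_le_two hrank.le hi hj hij hs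
  have hle : segreRank (S \ {s}) ≤ 1 :=
    segreRank_le_ncard.trans (Set.ncard_le_one_iff_subsingleton.2 hsub)
  rw [hcol s hs, hrank] at hle
  omega

theorem exists_agreeOff (hcol : Coloopless S) (hrank : segreRank S ≤ 3)
    {φ : Module.Dual K (V i)} (hsection : (S ∩ coordHyperplane φ).Nontrivial)
    (hφ : (S \ coordHyperplane φ).Nonempty) :
    ∃ u ∈ S \ coordHyperplane φ, ∃ v ∈ S \ coordHyperplane φ, u ≠ v ∧ AgreeOff i u v := by
  have htwo := two_le_segreRank_of_nontrivial hsection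
  obtain ⟨u, hu, v, hv, huv⟩ := hcol.nontrivial_sdiff_coordHyperplane hφ
  exact ⟨u, hu, v, hv, huv, agreeOff_of_segreRank_le_segreRank_inter_add_one (by omega) hu hv⟩

theorem subset_coordHyperplane_of_agreeOff (hcol : Coloopless S) (hrank : segreRank S ≤ 3)
    {u v : ∀ i, ℙ K (V i)} (hu : u ∈ S) (hv : v ∈ S) (huv : u ≠ v) (hagree : AgreeOff i u v)
    (hj : Varies S j) (hji : j ≠ i) (hlj : l ≠ j) {χ : Module.Dual K (V l)}
    (huχ : u ∈ coordHyperplane χ) (hvχ : v ∈ coordHyperplane χ) : S ⊆ coordHyperplane χ := by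
  by_contra hχ
  replace hχ : (S \ coordHyperplane χ).Nonempty := Set.sdiff_nonempty.2 hχ
  obtain ⟨ψ, huψ, hψ⟩ := hj.exists_coordHyperplane u
  have hvψ : v ∈ coordHyperplane ψ := (mem_coordHyperplane_congr (hagree j hji)).1 huψ
  obtain ⟨x, ⟨hx, hxψ⟩, y, ⟨hy, hyψ⟩, hxy, hagree'⟩ :=
    hcol.exists_agreeOff hrank ⟨u, ⟨hu, huψ⟩, v, ⟨hv, hvψ⟩, huv⟩ hψ
  have hxyχ : x ∈ coordHyperplane χ ↔ y ∈ coordHyperplane χ :=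
    mem_coordHyperplane_congr (hagree' l hlj)
  by_cases hxχ : x ∈ coordHyperplane χ
  · have hlt := segreRank_inter_coordHyperplane_lt hχ
    have hyχ := hxyχ.1 hxχ
    have hvar_i : Varies (S ∩ coordHyperplane χ) i :=
      hagree.varies ⟨hu, huχ⟩ ⟨hv, hvχ⟩ huv
    have hvar_j : Varies (S ∩ coordHyperplane χ) j :=
      hagree'.varies ⟨hx, hxχ⟩ ⟨hy, hyχ⟩ hxy
    have hsub : ((S ∩ coordHyperplane χ) \ {u}).Subsingleton :=
      subsingleton_sdiff_singleton_of_segreRank_le_two (by omega)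
        hvar_i hvar_j hji.symm ⟨hu, huχ⟩
    exact hxy (hsub ⟨⟨hx, hxχ⟩, fun h => hxψ (h ▸ huψ)⟩ ⟨⟨hy, hyχ⟩, fun h => hyψ (h ▸ huψ)⟩)
  · have htwo : 2 ≤ segreRank (S ∩ coordHyperplane χ) :=
      two_le_segreRank_of_nontrivial ⟨u, ⟨hu, huχ⟩, v, ⟨hv, hvχ⟩, huv⟩
    have hagree'' : AgreeOff l x y :=
      agreeOff_of_segreRank_le_segreRank_inter_add_one (S := S) (by omega) ⟨hx, hxχ⟩
        ⟨hy, fun h => hxχ (hxyχ.2 h)⟩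
    exact hxy (hagree''.eq hagree' hlj)

theorem projRank_le_two (hcol : Coloopless S) (hrank : segreRank S ≤ 3) (hi : Varies S i)
    (hj : Varies S j) (hij : i ≠ j) : projRank S i ≤ 2 := by
  by_contra! h
  have hpair (s t : ∀ i, ℙ K (V i)) : ({s, t} : Set _).ncard < projRank S i := by
    have := Set.ncard_insert_le s {t}
    rw [Set.ncard_singleton] at this
    omega
  have exists_hyperplane_pair (s t : ∀ i, ℙ K (V i)) : ∃ φ : Module.Dual K (V i),
      s ∈ coordHyperplane φ ∧ t ∈ coordHyperplane φ ∧ (S \ coordHyperplane φ).Nonempty := by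
    simpa [Set.pair_subset_iff, and_assoc] using
      exists_coordHyperplane_of_ncard_lt_projRank (hpair s t)
  obtain ⟨s, hs, t, ht, hst⟩ := Set.nontrivial_of_image _ _ hi
  obtain ⟨φ, hsφ, htφ, hφ⟩ := exists_hyperplane_pair s t
  obtain ⟨u, hu, v, hv, huv, hagree⟩ :=
    hcol.exists_agreeOff hrank ⟨s, ⟨hs, hsφ⟩, t, ⟨ht, htφ⟩, hst⟩ hφ
  obtain ⟨χ, huχ, hvχ, hχ⟩ := exists_hyperplane_pair u v
  exact Set.sdiff_nonempty.1 hχ <|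
    hcol.subset_coordHyperplane_of_agreeOff hrank hu.1 hv.1 huv hagree hj hij.symm hij huχ hvχ

theorem subsingleton_inter_coordHyperplane (hcol : Coloopless S) (hrank : segreRank S ≤ 3)
    (hj : Varies S j) (hl : Varies S l) (hji : j ≠ i) (hli : l ≠ i) (hlj : l ≠ j)
    {φ : Module.Dual K (V i)} (hφ : (S \ coordHyperplane φ).Nonempty) :
    (S ∩ coordHyperplane φ).Subsingleton := by
  by_contra hsection
  obtain ⟨u, hu, v, hv, huv, hagree⟩ :=
    hcol.exists_agreeOff hrank (Set.not_subsingleton_iff.1 hsection) hφ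
  obtain ⟨χ, huχ, hχ⟩ := hl.exists_coordHyperplane u
  exact Set.sdiff_nonempty.1 hχ <|
    hcol.subset_coordHyperplane_of_agreeOff hrank hu.1 hv.1 huv hagree hj hji hlj huχ
      ((mem_coordHyperplane_congr (hagree l hli)).1 huχ)

theorem injOn_eval (hcol : Coloopless S) (hrank : segreRank S ≤ 3) (hi : Varies S i)
    (hj : Varies S j) (hl : Varies S l) (hji : j ≠ i) (hli : l ≠ i) (hlj : l ≠ j) :
    Set.InjOn (Function.eval i) S := by
  intro x hx y hy hxy
  obtain ⟨φ, hxφ, hφ⟩ := hi.exists_coordHyperplane x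
  exact hcol.subsingleton_inter_coordHyperplane hrank hj hl hji hli hlj hφ
    ⟨hx, hxφ⟩ ⟨hy, (mem_coordHyperplane_congr hxy).1 hxφ⟩

theorem eq_or_eq_of_varies (hcol : Coloopless S) (hrank : segreRank S = 3) (hi : Varies S i)
    (hj : Varies S j) (hij : i ≠ j) (hl : Varies S l) : l = i ∨ l = j := by
  classical
  by_contra! ⟨hli, hlj⟩
  have hinj_j := hcol.injOn_eval hrank.le hj hi hl hij hlj hli
  have hinj_l := hcol.injOn_eval hrank.le hl hi hj hli.symm hlj.symm hij.symm
  obtain ⟨s, hs⟩ : S.Nonempty := segreRank_pos_iff.1 (by omega)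
  obtain ⟨φ, hsφ, hφ⟩ := hi.exists_coordHyperplane s
  have hsection : S ∩ coordHyperplane φ = {s} :=
    (hcol.subsingleton_inter_coordHyperplane hrank.le hj hl hij.symm hli hlj hφ).eq_singleton_of_mem
      ⟨hs, hsφ⟩
  have hoff : S \ coordHyperplane φ = S \ {s} := by
    rw [← hsection, Set.sdiff_self_inter]
  have hresidual := segreRank_inter_add_segreRank_residual_le (S := S) φ (s i)
  rw [hsection, hoff, segreRank_singleton, hrank] at hresidual
  have hinj : Set.InjOn (Function.update · i (s i)) (S \ {s}) := fun x hx y hy hxy =>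
    hinj_j hx.1 hy.1 (agreeOff_of_update_eq hxy j hij.symm)
  have hcard : 2 < (S \ {s}).ncard := by
    have := segreRank_le_ncard (S := S \ {s})
    rw [hcol s hs, hrank] at this
    omega
  obtain ⟨b, c, hb, hc, hbc⟩ :=
    (Set.one_lt_ncard_iff (Set.toFinite _)).1 (Nat.lt_of_succ_lt hcard)
  have hvaries {m : ι} (hmi : m ≠ i) (hm : Set.InjOn (Function.eval m) S) :
      Varies ((Function.update · i (s i)) '' (S \ {s})) m :=
    varies_of_ne ⟨b, hb, rfl⟩ ⟨c, hc, rfl⟩ (by simpa [hmi] using hm.ne hb.1 hc.1 hbc)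
  refine hlj (eq_of_varies_of_two_lt_ncard (by omega) ?_ (hvaries hli hinj_l)
    (hvaries hij.symm hinj_j))
  rwa [hinj.ncard_image]

theorem exists_projRank_of_segreRank_eq_three (hcol : Coloopless S) (hrank : segreRank S = 3) :
    (∃ i, projRank S i = 3 ∧ ∀ j, j ≠ i → projRank S j = 1) ∨
    (∃ i j, i ≠ j ∧ projRank S i = 2 ∧ projRank S j = 2 ∧
      ∀ l, l ≠ i → l ≠ j → projRank S l = 1) := by
  have hne : S.Nonempty := segreRank_pos_iff.1 (by omega)
  by_cases h : ∃ i j, i ≠ j ∧ Varies S i ∧ Varies S j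
  · obtain ⟨i, j, hij, hi, hj⟩ := h
    refine Or.inr ⟨i, j, hij, ?_, ?_, fun l hli hlj => projRank_eq_one_of_not_varies hne fun hl =>
      (hcol.eq_or_eq_of_varies hrank hi hj hij hl).elim hli hlj⟩
    · exact (hcol.projRank_le_two hrank.le hi hj hij).antisymm (two_le_projRank_of_varies hi)
    · exact (hcol.projRank_le_two hrank.le hj hi hij.symm).antisymm (two_le_projRank_of_varies hj)
  · rw [← hrank]
    refine Or.inl (exists_projRank_eq_segreRank (hcol.nontrivial hne) fun i j hi hj => ?_)
    by_contra hij
    exact h ⟨i, j, hij, hi, hj⟩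

end Coloopless

namespace IsKernel

variable {A : Set (∀ i, ℙ K (V i))}

theorem finite (hA : IsKernel A S) : S.Finite :=
  Set.finite_of_ncard_pos (hA.excess_pos.trans_le (Nat.sub_le _ _))

theorem coloopless (hA : IsKernel A S) : Coloopless A := by
  intro s hs
  have hAfin := hA.finite.subset hA.subset
  have : Finite A := hAfin
  refine (segreRank_mono Set.sdiff_subset).antisymm ?_
  have hlt := hA.excess_lt (A \ {s}) (Set.sdiff_singleton_ssubset.2 hs)
  have hcard := Set.ncard_sdiff_singleton_add_one hs hAfin
  have hpos := hA.excess_pos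
  rw [← hA.excess_eq] at hlt hpos
  simp only [excess] at hlt hpos
  omega

theorem nonempty (hA : IsKernel A S) : A.Nonempty := by
  have hpos := hA.excess_eq ▸ hA.excess_pos
  exact Set.nonempty_of_ncard_ne_zero (hpos.trans_le (Nat.sub_le _ _)).ne'

end IsKernel

end Segre

theorem card_five_e_ge_two_classification_general {K ι : Type*} [Field K] [Finite ι]
    {V : ι → Type*} [∀ i, AddCommGroup (V i)] [∀ i, Module K (V i)]
    {A S : Set (∀ i, ℙ K (V i))} (hA : Segre.IsKernel A S)
    (hS : S.ncard ≤ Segre.excess S + 3) :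
    (Segre.excess S + 2 = S.ncard ∧ A = S ∧
      ∃ i, Segre.projRank A i = 2 ∧ ∀ j, j ≠ i → Segre.projRank A j = 1) ∨
    (Segre.excess S + 3 = S.ncard ∧ A = S ∧
      ∃ i, Segre.projRank A i = 3 ∧ ∀ j, j ≠ i → Segre.projRank A j = 1) ∨
    (Segre.excess S + 3 = S.ncard ∧ A = S ∧
      ∃ i j, i ≠ j ∧ Segre.projRank A i = 2 ∧ Segre.projRank A j = 2 ∧
        ∀ l, l ≠ i → l ≠ j → Segre.projRank A l = 1) ∨
    (Segre.excess S + 3 = S.ncard ∧ A.ncard + 1 = S.ncard ∧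
      ∃ i, Segre.projRank A i = 2 ∧ ∀ j, j ≠ i → Segre.projRank A j = 1) := by
  have : Finite S := hA.finite
  have : Finite A := hA.finite.subset hA.subset
  have htwo := Segre.two_le_segreRank_of_nontrivial (hA.coloopless.nontrivial hA.nonempty)
  have hmono := Segre.segreRank_mono hA.subset
  have hpos := hA.excess_pos
  have hexcess := hA.excess_eq
  have heq : S.ncard ≤ A.ncard → A = S := fun h => Set.eq_of_subset_of_ncard_le hA.subset h
  simp only [Segre.excess] at hS hpos hexcess ⊢
  obtain hrank | hrank : Segre.segreRank A = 2 ∨ Segre.segreRank A = 3 := by omega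
  · have hline := hA.coloopless.exists_projRank_eq_two hrank
    obtain hrankS | hrankS : Segre.segreRank S = 2 ∨ Segre.segreRank S = 3 := by omega
    · exact Or.inl ⟨by omega, heq (by omega), hline⟩
    · exact Or.inr <| Or.inr <| Or.inr ⟨by omega, by omega, hline⟩
  · have hexcessS : S.ncard - Segre.segreRank S + 3 = S.ncard := by omega
    obtain hplane | hquadric := hA.coloopless.exists_projRank_of_segreRank_eq_three hrank
    · exact Or.inr <| Or.inl ⟨hexcessS, heq (by omega), hplane⟩
    · exact Or.inr <| Or.inr <| Or.inl ⟨hexcessS, heq (by omega), hquadric⟩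

theorem card_five_e_ge_two_classification
    {K : Type*} [Field K] {k : ℕ} {n : Fin k → ℕ}
    (hk : 0 < k) (hn : ∀ i, 0 < n i)
    (S : Set (MultiProj K n)) (hSfin : S.Finite) (hScard : S.ncard = 5)
    (hnd : Nondeg S) (he2 : 2 ≤ eSet S)
    (A : Set (MultiProj K n)) (hAS : A ⊆ S) (heA : eSet A = eSet S)
    (hker : ∀ A' : Set (MultiProj K n), A' ⊂ A → eSet A' < eSet S) :
    (eSet S = 3 ∧ A = S ∧
      ∃ i, projSpanDim A i = 2 ∧ ∀ j, j ≠ i → projSpanDim A j = 1) ∨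
    (eSet S = 2 ∧ A = S ∧
      ∃ i, projSpanDim A i = 3 ∧ ∀ j, j ≠ i → projSpanDim A j = 1) ∨
    (eSet S = 2 ∧ A = S ∧
      ∃ i j, i ≠ j ∧ projSpanDim A i = 2 ∧ projSpanDim A j = 2 ∧
        ∀ l, l ≠ i → l ≠ j → projSpanDim A l = 1) ∨
    (eSet S = 2 ∧ A.ncard = 4 ∧
      ∃ i, projSpanDim A i = 2 ∧ ∀ j, j ≠ i → projSpanDim A j = 1) := by
  have hA : Segre.IsKernel A S := ⟨two_pos.trans_le he2, hAS, heA, hker⟩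
  have h := card_five_e_ge_two_classification_general hA
    (hScard.trans_le (Nat.add_le_add_right he2 3))
  simp only [hScard, Nat.reduceEqDiff] at h
  exact h
end
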